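/- Let σ > 0, r, q ∈ ℝ, T > 0, 0 < B ≤ K, and λ = (2/σ²)(r − q − σ²/2). The down-and-out call price u(s,t) = C(s,K,t) − (B/s)^λ · C(B²/s, K, t), where C(s,K,t) = s·e^{-q t}·N(d₁(s,K,t)) − K·e^{-r t}·N(d₂(s,K,t)), satisfies the forward Black–Scholes PDE ∂u/∂t − (1/2)σ²s² ∂²u/∂s² − (r−q)s ∂u/∂s + r u = 0 for all (s,t) ∈ (B,∞) × (0,T], and satisfies the knock-out boundary condition u(B,t) = 0 for all t ∈ (0,T]. -/

import Mathlib

open Real Set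

/-- The standard normal cumulative distribution function. -/
noncomputable def stdNormalCDF (x : ℝ) : ℝ :=
  ∫ y in Set.Iic x, (Real.sqrt (2 * Real.pi))⁻¹ * Real.exp (-(y ^ 2) / 2)

/-- d₁(s,K,t) in the Black–Scholes formula. -/
noncomputable def d1 (σ r q s K t : ℝ) : ℝ :=
  (Real.log (s / K) + (r - q + σ ^ 2 / 2) * t) / (σ * Real.sqrt t)

/-- d₂(s,K,t) in the Black–Scholes formula. -/
noncomputable def d2 (σ r q s K t : ℝ) : ℝ :=
  d1 σ r q s K t - σ * Real.sqrt t

/-- The Black–Scholes European call price. -/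
noncomputable def callPrice (σ r q K s t : ℝ) : ℝ :=
  s * Real.exp (-q * t) * stdNormalCDF (d1 σ r q s K t)
    - K * Real.exp (-r * t) * stdNormalCDF (d2 σ r q s K t)

/-- The Black–Scholes European put price. -/
noncomputable def putPrice (σ r q K s t : ℝ) : ℝ :=
  K * Real.exp (-r * t) * stdNormalCDF (-(d2 σ r q s K t))
    - s * Real.exp (-q * t) * stdNormalCDF (-(d1 σ r q s K t))

/-- The standard normal probability density function. -/
noncomputable def stdNormalPDF (x : ℝ) : ℝ :=
  (Real.sqrt (2 * Real.pi))⁻¹ * Real.exp (-(x ^ 2) / 2)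

/-- The reflection exponent λ = (2/σ²)(r − q − σ²/2). -/
noncomputable def reflectionExponent (σ r q : ℝ) : ℝ :=
  (2 / σ ^ 2) * (r - q - σ ^ 2 / 2)

/-- The down-and-out call price u(s,t) = C(s,K,t) − (B/s)^λ·C(B²/s,K,t). -/
noncomputable def downOutCall (σ r q K B s t : ℝ) : ℝ :=
  callPrice σ r q K s t
    - (B / s) ^ reflectionExponent σ r q * callPrice σ r q K (B ^ 2 / s) t

/-!
Write `θ = s ∂/∂s`. Since `r - q = σ² (λ + 1) / 2`, the Black–Scholes equation reads
`∂u/∂t = (σ² / 2) θ (θ + λ) u - r u`. The reflection `F ↦ (B / s) ^ λ F (B² / s)` turns `θ` into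
`-(θ + λ)`, which exchanges the two factors of `θ (θ + λ)` up to sign, so it maps solutions to
solutions. It also fixes the value at `s = B`, so a solution minus its reflection is a solution
vanishing on the barrier.
-/

section NormalDistribution

lemma hasDerivAt_integral_Iic {E : Type*} [NormedAddCommGroup E] [NormedSpace ℝ E]
    [CompleteSpace E] {f : ℝ → E} {x : ℝ} (hf : MeasureTheory.Integrable f)
    (hx : ContinuousAt f x) : HasDerivAt (fun z => ∫ y in Iic z, f y) (f x) x := by
  have hsplit (z : ℝ) : ∫ y in Iic z, f y = (∫ y in Iic x, f y) + ∫ y in x..z, f y := by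
    rw [← intervalIntegral.integral_Iic_sub_Iic hf.integrableOn hf.integrableOn, add_sub_cancel]
  rw [funext hsplit]
  exact (intervalIntegral.integral_hasDerivAt_right hf.intervalIntegrable
    hf.aestronglyMeasurable.stronglyMeasurableAtFilter hx).const_add _

lemma stdNormalPDF_eq_gaussianPDFReal : stdNormalPDF = ProbabilityTheory.gaussianPDFReal 0 1 := by
  ext x
  simp [stdNormalPDF, ProbabilityTheory.gaussianPDFReal]

lemma hasDerivAt_stdNormalCDF (x : ℝ) : HasDerivAt stdNormalCDF (stdNormalPDF x) x := by
  have hint : MeasureTheory.Integrable stdNormalPDF :=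
    stdNormalPDF_eq_gaussianPDFReal ▸ ProbabilityTheory.integrable_gaussianPDFReal 0 1
  have hcont : Continuous stdNormalPDF := by
    unfold stdNormalPDF
    fun_prop
  exact hasDerivAt_integral_Iic hint hcont.continuousAt

lemma stdNormalPDF_sub (x a : ℝ) :
    stdNormalPDF (x - a) = stdNormalPDF x * exp (x * a - a ^ 2 / 2) := by
  unfold stdNormalPDF
  rw [mul_assoc, ← exp_add]
  ring_nf

end NormalDistribution

/-- Classical solutions on `(0, ∞) × (0, ∞)` of the forward Black–Scholes equation, in the asset
price `s` and the time to expiry `t`. The differentiability fields ensure that no `deriv` in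
`equation` takes its junk value. -/
structure IsBlackScholesSolution (σ r q : ℝ) (u : ℝ → ℝ → ℝ) : Prop where
  differentiableAt_time : ∀ {s t : ℝ}, 0 < s → 0 < t → DifferentiableAt ℝ (u s) t
  differentiableAt_price : ∀ {s t : ℝ}, 0 < s → 0 < t → DifferentiableAt ℝ (fun x => u x t) s
  differentiableAt_deriv_price : ∀ {s t : ℝ}, 0 < s → 0 < t →
    DifferentiableAt ℝ (deriv fun y => u y t) s
  equation : ∀ {s t : ℝ}, 0 < s → 0 < t →
    deriv (u s) t - (1 / 2) * σ ^ 2 * s ^ 2 * deriv (deriv fun y => u y t) s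
      - (r - q) * s * deriv (fun x => u x t) s + r * u s t = 0

namespace IsBlackScholesSolution

variable {σ r q : ℝ} {u v : ℝ → ℝ → ℝ}

lemma of_hasDerivAt {ut us uss : ℝ → ℝ → ℝ}
    (ht : ∀ {s t}, 0 < s → 0 < t → HasDerivAt (u s) (ut s t) t)
    (hs : ∀ {s t}, 0 < s → 0 < t → HasDerivAt (fun x => u x t) (us s t) s)
    (hss : ∀ {s t}, 0 < s → 0 < t → HasDerivAt (fun x => us x t) (uss s t) s)
    (heq : ∀ {s t}, 0 < s → 0 < t →
      ut s t - (1 / 2) * σ ^ 2 * s ^ 2 * uss s t - (r - q) * s * us s t + r * u s t = 0) :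
    IsBlackScholesSolution σ r q u := by
  have hderiv {s t : ℝ} (hs₀ : 0 < s) (ht₀ : 0 < t) :
      HasDerivAt (deriv fun y => u y t) (uss s t) s := by
    refine (hss hs₀ ht₀).congr_of_eventuallyEq ?_
    filter_upwards [lt_mem_nhds hs₀] with x hx using (hs hx ht₀).deriv
  refine ⟨fun hs₀ ht₀ => (ht hs₀ ht₀).differentiableAt,
    fun hs₀ ht₀ => (hs hs₀ ht₀).differentiableAt,
    fun hs₀ ht₀ => (hderiv hs₀ ht₀).differentiableAt, fun hs₀ ht₀ => ?_⟩
  rw [(ht hs₀ ht₀).deriv, (hs hs₀ ht₀).deriv, (hderiv hs₀ ht₀).deriv]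
  exact heq hs₀ ht₀

lemma sub (hu : IsBlackScholesSolution σ r q u) (hv : IsBlackScholesSolution σ r q v) :
    IsBlackScholesSolution σ r q (fun s t => u s t - v s t) :=
  of_hasDerivAt
    (fun hs ht => (hu.differentiableAt_time hs ht).hasDerivAt.sub
      (hv.differentiableAt_time hs ht).hasDerivAt)
    (fun hs ht => (hu.differentiableAt_price hs ht).hasDerivAt.sub
      (hv.differentiableAt_price hs ht).hasDerivAt)
    (fun hs ht => (hu.differentiableAt_deriv_price hs ht).hasDerivAt.sub
      (hv.differentiableAt_deriv_price hs ht).hasDerivAt)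
    (fun hs ht => by linear_combination hu.equation hs ht - hv.equation hs ht)

end IsBlackScholesSolution

/-- The reflection `x ↦ (B / x) ^ l * F (B ^ 2 / x)` of a price profile `F` in the barrier `B`,
used to cancel `F` at `x = B`. -/
noncomputable def barrierReflection (B l : ℝ) (F : ℝ → ℝ) (x : ℝ) : ℝ :=
  (B / x) ^ l * F (B ^ 2 / x)

section BarrierReflection

variable {B l x : ℝ} {F F' F'' : ℝ → ℝ}

lemma barrierReflection_self (hB : B ≠ 0) : barrierReflection B l F B = F B := by
  rw [barrierReflection, div_self hB, one_rpow, one_mul, sq, mul_div_cancel_right₀ B hB]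

lemma hasDerivAt_const_div (a : ℝ) (hx : x ≠ 0) :
    HasDerivAt (fun y => a / y) (-a / x ^ 2) x := by
  refine ((hasDerivAt_const x a).div (hasDerivAt_id x) hx).congr_deriv ?_
  simp

lemma hasDerivAt_const_div_rpow (hB : B ≠ 0) (hx : x ≠ 0) :
    HasDerivAt (fun y => (B / y) ^ l) (-l * (B / x) ^ l / x) x := by
  have hBx : B / x ≠ 0 := div_ne_zero hB hx
  refine ((hasDerivAt_const_div B hx).rpow_const (Or.inl hBx)).congr_deriv ?_
  rw [rpow_sub_one hBx]
  field_simp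

-- In terms of `θ = x d/dx`, reflection turns `θ` into `-(l + θ)`.
lemma hasDerivAt_barrierReflection (hB : B ≠ 0) (hx : x ≠ 0)
    (hF : HasDerivAt F (F' (B ^ 2 / x)) (B ^ 2 / x)) :
    HasDerivAt (barrierReflection B l F)
      (-barrierReflection B l (fun y => l * F y + y * F' y) x / x) x := by
  refine ((hasDerivAt_const_div_rpow hB hx).mul
    (hF.comp x (hasDerivAt_const_div (B ^ 2) hx))).congr_deriv ?_
  simp only [barrierReflection, Function.comp_apply]
  field_simp
  ring

lemma hasDerivAt_deriv_barrierReflection (hB : B ≠ 0) (hx : x ≠ 0)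
    (hF : HasDerivAt F (F' (B ^ 2 / x)) (B ^ 2 / x))
    (hF' : HasDerivAt F' (F'' (B ^ 2 / x)) (B ^ 2 / x)) :
    HasDerivAt (fun x => -barrierReflection B l (fun y => l * F y + y * F' y) x / x)
      (barrierReflection B l (fun y => l * (l + 1) * F y + 2 * (l + 1) * y * F' y
        + y ^ 2 * F'' y) x / x ^ 2) x := by
  have hG : HasDerivAt (fun y => l * F y + y * F' y)
      (l * F' (B ^ 2 / x) + (1 * F' (B ^ 2 / x) + B ^ 2 / x * F'' (B ^ 2 / x))) (B ^ 2 / x) :=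
    (hF.const_mul l).add ((hasDerivAt_id _).mul hF')
  have hreflect := hasDerivAt_barrierReflection (l := l)
    (F' := fun y => l * F' y + (1 * F' y + y * F'' y)) hB hx hG
  refine (hreflect.neg.div (hasDerivAt_id x) hx).congr_deriv ?_
  simp only [Pi.neg_apply, barrierReflection, id]
  field_simp
  ring

end BarrierReflection

lemma sq_mul_reflectionExponent_add_one {σ : ℝ} (hσ : σ ≠ 0) (r q : ℝ) :
    σ ^ 2 * (reflectionExponent σ r q + 1) = 2 * (r - q) := by
  unfold reflectionExponent
  field_simp
  ring

lemma IsBlackScholesSolution.reflect {σ r q B : ℝ} {u : ℝ → ℝ → ℝ} (hσ : σ ≠ 0) (hB : B ≠ 0)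
    (hu : IsBlackScholesSolution σ r q u) :
    IsBlackScholesSolution σ r q
      (fun s t => barrierReflection B (reflectionExponent σ r q) (fun x => u x t) s) := by
  have hz {s : ℝ} (hs : 0 < s) : 0 < B ^ 2 / s := by positivity
  have hus {s t : ℝ} (hs : 0 < s) (ht : 0 < t) :=
    (hu.differentiableAt_price (hz hs) ht).hasDerivAt
  have huss {s t : ℝ} (hs : 0 < s) (ht : 0 < t) :=
    (hu.differentiableAt_deriv_price (hz hs) ht).hasDerivAt
  refine of_hasDerivAt
    (fun {s _} hs ht => (hu.differentiableAt_time (hz hs) ht).hasDerivAt.const_mul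
      ((B / s) ^ reflectionExponent σ r q))
    (fun hs ht => hasDerivAt_barrierReflection hB hs.ne' (hus hs ht))
    (fun hs ht => hasDerivAt_deriv_barrierReflection hB hs.ne' (hus hs ht) (huss hs ht))
    (fun {s t} hs ht => ?_)
  have hl := sq_mul_reflectionExponent_add_one hσ r q
  have heq := hu.equation (hz hs) ht
  simp only [barrierReflection]
  generalize reflectionExponent σ r q = l at hl ⊢
  generalize B ^ 2 / s = z at heq ⊢
  have hcancel (a b : ℝ) : (1 / 2) * σ ^ 2 * s ^ 2 * (a / s ^ 2) + (r - q) * s * (-b / s) =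
      (1 / 2) * σ ^ 2 * a - (r - q) * b := by
    field_simp
    ring
  rw [sub_sub, hcancel]
  linear_combination (B / s) ^ l * heq
    - (B / s) ^ l / 2 * (l * u z t + 2 * z * deriv (fun x => u x t) z) * hl

section CallPrice

variable {σ r q K s t : ℝ}

lemma d1_mul_vol (hσ : σ ≠ 0) (ht : 0 < t) :
    d1 σ r q s K t * (σ * √t) = log (s / K) + (r - q + σ ^ 2 / 2) * t :=
  div_mul_cancel₀ _ (mul_ne_zero hσ (sqrt_pos.2 ht).ne')

-- By this identity, the derivatives of `d1` and `d2` enter those of the call only through their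
-- difference.
lemma strike_mul_stdNormalPDF_d2 (hσ : σ ≠ 0) (hK : 0 < K) (hs : 0 < s) (ht : 0 < t) :
    K * exp (-r * t) * stdNormalPDF (d2 σ r q s K t) =
      s * exp (-q * t) * stdNormalPDF (d1 σ r q s K t) := by
  have hexponent : d1 σ r q s K t * (σ * √t) - (σ * √t) ^ 2 / 2 = log (s / K) + (r - q) * t := by
    rw [d1_mul_vol hσ ht, mul_pow, sq_sqrt ht.le]
    ring
  have hdiscount : exp (-q * t) = exp (-r * t) * exp ((r - q) * t) := by
    rw [← exp_add]
    ring_nf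
  rw [d2, stdNormalPDF_sub, hexponent, exp_add, exp_log (div_pos hs hK), hdiscount]
  field_simp

lemma hasDerivAt_d1_price (hK : K ≠ 0) (hs : s ≠ 0) :
    HasDerivAt (fun x => d1 σ r q x K t) (1 / (s * (σ * √t))) s := by
  refine (((((hasDerivAt_id s).div_const K).log (div_ne_zero hs hK)).add_const
    ((r - q + σ ^ 2 / 2) * t)).div_const (σ * √t)).congr_deriv ?_
  rw [id, div_div_div_cancel_right₀ hK, div_div]

lemma hasDerivAt_callPrice_price (hσ : σ ≠ 0) (hK : 0 < K) (hs : 0 < s) (ht : 0 < t) :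
    HasDerivAt (fun x => callPrice σ r q K x t)
      (exp (-q * t) * stdNormalCDF (d1 σ r q s K t)) s := by
  have hd1 := hasDerivAt_d1_price (σ := σ) (r := r) (q := q) (t := t) hK.ne' hs.ne'
  have hd2 : HasDerivAt (fun x => d2 σ r q x K t) (1 / (s * (σ * √t))) s := hd1.sub_const _
  have hasset := ((hasDerivAt_id s).mul_const (exp (-q * t))).mul
    ((hasDerivAt_stdNormalCDF _).comp s hd1)
  have hcash := ((hasDerivAt_stdNormalCDF _).comp s hd2).const_mul (K * exp (-r * t))
  refine (hasset.sub hcash).congr_deriv ?_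
  simp only [id, Function.comp_apply]
  linear_combination -(1 / (s * (σ * √t))) *
    strike_mul_stdNormalPDF_d2 (r := r) (q := q) hσ hK hs ht

lemma hasDerivAt_exp_mul_stdNormalCDF_d1_price (hK : K ≠ 0) (hs : s ≠ 0) :
    HasDerivAt (fun x => exp (-q * t) * stdNormalCDF (d1 σ r q x K t))
      (exp (-q * t) * (stdNormalPDF (d1 σ r q s K t) * (1 / (s * (σ * √t))))) s :=
  ((hasDerivAt_stdNormalCDF _).comp s (hasDerivAt_d1_price hK hs)).const_mul _

lemma hasDerivAt_callPrice_time (hσ : σ ≠ 0) (hK : 0 < K) (hs : 0 < s) (ht : 0 < t) :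
    HasDerivAt (callPrice σ r q K s)
      (s * exp (-q * t) * (stdNormalPDF (d1 σ r q s K t) * (σ / (2 * √t)))
        - q * (s * exp (-q * t) * stdNormalCDF (d1 σ r q s K t))
        + r * (K * exp (-r * t) * stdNormalCDF (d2 σ r q s K t))) t := by
  have hvol : HasDerivAt (fun τ => σ * √τ) (σ * (1 / (2 * √t))) t :=
    (hasDerivAt_sqrt ht.ne').const_mul σ
  -- The value of `d1'` is irrelevant because it cancels against the derivative of `d2`.
  obtain ⟨d1', hd1⟩ : ∃ d1', HasDerivAt (fun τ => d1 σ r q s K τ) d1' t :=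
    ⟨_, (((hasDerivAt_id t).const_mul (r - q + σ ^ 2 / 2)).const_add (log (s / K))).div hvol
      (mul_ne_zero hσ (sqrt_pos.2 ht).ne')⟩
  have hd2 : HasDerivAt (fun τ => d2 σ r q s K τ) (d1' - σ * (1 / (2 * √t))) t := hd1.sub hvol
  have hdiscount (a : ℝ) : HasDerivAt (fun τ => exp (-a * τ)) (exp (-a * t) * (-a * 1)) t :=
    ((hasDerivAt_id t).const_mul (-a)).exp
  have hasset := ((hdiscount q).const_mul s).mul ((hasDerivAt_stdNormalCDF _).comp t hd1)
  have hcash := ((hdiscount r).const_mul K).mul ((hasDerivAt_stdNormalCDF _).comp t hd2)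
  refine (hasset.sub hcash).congr_deriv ?_
  simp only [Function.comp_apply]
  linear_combination -(d1' - σ * (1 / (2 * √t))) *
    strike_mul_stdNormalPDF_d2 (r := r) (q := q) hσ hK hs ht

lemma isBlackScholesSolution_callPrice (hσ : σ ≠ 0) (hK : 0 < K) :
    IsBlackScholesSolution σ r q (callPrice σ r q K) := by
  refine .of_hasDerivAt (fun hs ht => hasDerivAt_callPrice_time hσ hK hs ht)
    (fun hs ht => hasDerivAt_callPrice_price hσ hK hs ht)
    (fun hs _ => hasDerivAt_exp_mul_stdNormalCDF_d1_price hK.ne' hs.ne') (fun _ _ => ?_)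
  unfold callPrice
  field_simp
  ring

end CallPrice

theorem downOutCall_solves_pde_and_boundary_general {σ K B : ℝ} (r q : ℝ) (hσ : σ ≠ 0)
    (hB : 0 < B) (hK : 0 < K) :
    IsBlackScholesSolution σ r q (downOutCall σ r q K B) ∧
      ∀ t : ℝ, 0 < t → downOutCall σ r q K B B t = 0 := by
  have hcall := isBlackScholesSolution_callPrice (r := r) (q := q) hσ hK
  exact ⟨hcall.sub (hcall.reflect hσ hB.ne'),
    fun t _ => sub_eq_zero.2
      (barrierReflection_self (F := fun x => callPrice σ r q K x t) hB.ne').symm⟩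

/-- The down-and-out call price satisfies the forward Black–Scholes PDE on
    (B,∞)×(0,T] and the knock-out boundary condition u(B,t) = 0. -/
theorem downOutCall_solves_pde_and_boundary
    (σ r q K B T : ℝ) (hσ : 0 < σ) (hB : 0 < B) (hBK : B ≤ K) (hT : 0 < T) :
    (∀ s t : ℝ, B < s → 0 < t → t ≤ T →
      deriv (fun τ => downOutCall σ r q K B s τ) t
        - (1 / 2) * σ ^ 2 * s ^ 2 *
            deriv (fun x => deriv (fun y => downOutCall σ r q K B y t) x) s
        - (r - q) * s * deriv (fun x => downOutCall σ r q K B x t) s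
        + r * downOutCall σ r q K B s t = 0) ∧
    (∀ t : ℝ, 0 < t → t ≤ T → downOutCall σ r q K B B t = 0) := by
  obtain ⟨hpde, hboundary⟩ :=
    downOutCall_solves_pde_and_boundary_general r q hσ.ne' hB (hB.trans_le hBK)
  exact ⟨fun s t hs ht _ => hpde.equation (hB.trans hs) ht, fun t ht _ => hboundary t ht⟩
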